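/- arXiv:1911.03948 — 2 statements merged into one kernel-verified Lean document; each statement's English description precedes it below -/
import Mathlib

section
/- If X is a path-connected metrizable ANR, then SC_n(X) ≥ cat(S_nX / c_n(X)) − 1 for every n ∈ ℕ₀, where S_nX / c_n(X) denotes the quotient space of S_nX obtained by collapsing the subspace c_n(X) to a point. -/
/-!
Write `Y = S_nX`, `A = c_n(X)` and `q : Y → Y / A`. A sphere filling `s` over `U ⊆ Y` deforms `U`
into `A` inside `Y`, through `γ ↦ (p ↦ s(γ)((1 - t) p))`. If `T ⊆ Y / A` is open and `q⁻¹(T)`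
carries a filling that is constant on `q⁻¹(T) ∩ A` (each constant map is filled by a constant
ball), then this deformation is compatible with the collapse of `A` and contracts `T` in `Y / A`
to the base point (`isCatSet_of_filling`).

Given `k` open filling domains `U i` covering `Y`, this applies to the `k` open sets
`q (U i \ A)`, for which the condition on `A` is void, and these cover everything but the base
point. The ANR hypothesis yields one further open set around the base point
(`exists_nhd_filling`): the map `(γ, p) ↦ γ p` on `Y × Sⁿ` and `(c_n x, p) ↦ x` on `A × B^{n+1}`
is defined on a closed subset of the metrizable space `Y × B^{n+1}`, hence extends to an open
neighbourhood `N` of it, and by compactness of the ball the set of those `γ` with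
`{γ} × B^{n+1} ⊆ N` is open; the extension is a filling over it. Altogether
`cat(Y / A) ≤ k + 1`.
-/

open Metric Set ContinuousMap
open scoped RealInnerProductSpace

noncomputable section

universe u

/-- The unit sphere `Sⁿ` in `ℝ^{n+1}`. -/
abbrev Sph (n : ℕ) : Set (EuclideanSpace ℝ (Fin (n + 1))) := Metric.sphere 0 1

/-- The closed unit ball `B^{n+1}` in `ℝ^{n+1}`. -/
abbrev Ball (n : ℕ) : Set (EuclideanSpace ℝ (Fin (n + 1))) := Metric.closedBall 0 1

/-- `S_nX`: the space of nullhomotopic continuous maps `Sⁿ → X`, with the compact-open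
topology (as a subspace of `C(Sⁿ, X)`). -/
abbrev SphereMaps (n : ℕ) (X : Type*) [TopologicalSpace X] : Type _ :=
  {f : C(↥(Sph n), X) // ∃ x : X, f.Homotopic (ContinuousMap.const _ x)}

/-- `B_{n+1}X`: the space of continuous maps `B^{n+1} → X` with the compact-open topology. -/
abbrev BallMaps (n : ℕ) (X : Type*) [TopologicalSpace X] : Type _ := C(↥(Ball n), X)

/-- The inclusion `Sⁿ ↪ B^{n+1}`. -/
def sphIncl (n : ℕ) : C(↥(Sph n), ↥(Ball n)) :=
  ⟨fun p => ⟨p.1, sphere_subset_closedBall p.2⟩, (continuous_subtype_val.subtype_mk _)⟩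

/-- A sphere filling over `A ⊆ S_nX`: a continuous map `s : A → B_{n+1}X` with
`s(γ)|_{Sⁿ} = γ` for all `γ ∈ A`. -/
def IsSphereFilling {n : ℕ} {X : Type*} [TopologicalSpace X]
    (A : Set (SphereMaps n X)) (s : C(↥A, BallMaps n X)) : Prop :=
  ∀ γ : ↥A, (s γ).comp (sphIncl n) = (γ : SphereMaps n X).1

/-- A subset `A ⊆ S_nX` is a sphere filling domain if a sphere filling over `A` exists. -/
def IsFillingDomain {n : ℕ} {X : Type*} [TopologicalSpace X] (A : Set (SphereMaps n X)) : Prop :=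
  ∃ s : C(↥A, BallMaps n X), IsSphereFilling A s

/-- The `n`-spherical complexity `SC_n(X)`: the minimal number of open sphere filling
domains needed to cover `S_nX` (`⊤` if no finite cover exists). -/
def SC (n : ℕ) (X : Type*) [TopologicalSpace X] : ℕ∞ :=
  sInf {k : ℕ∞ | ∃ m : ℕ, k = m ∧ ∃ U : Fin m → Set (SphereMaps n X),
    (∀ i, IsOpen (U i) ∧ IsFillingDomain (U i)) ∧ (⋃ i, U i) = univ}

/-- `c_n : X → S_nX`, the embedding of `X` as the constant maps. -/
def constSph (n : ℕ) (X : Type*) [TopologicalSpace X] (x : X) : SphereMaps n X :=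
  ⟨ContinuousMap.const _ x, ⟨x, ContinuousMap.Homotopic.refl _⟩⟩

/-- The inclusion map of a subset, as a continuous map. -/
def inclC {Y : Type*} [TopologicalSpace Y] (U : Set Y) : C(↥U, Y) :=
  ⟨Subtype.val, continuous_subtype_val⟩

/-- A subset of `Y` whose inclusion into `Y` is nullhomotopic. -/
def IsCatSet {Y : Type*} [TopologicalSpace Y] (U : Set Y) : Prop :=
  ∃ y : Y, (inclC U).Homotopic (ContinuousMap.const _ y)

/-- The Lusternik–Schnirelmann category of `Y`: the minimal number of open subsets with
nullhomotopic inclusion needed to cover `Y` (`⊤` if no finite cover exists). -/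
def LScat (Y : Type*) [TopologicalSpace Y] : ℕ∞ :=
  sInf {k : ℕ∞ | ∃ m : ℕ, k = m ∧ ∃ U : Fin m → Set Y,
    (∀ i, IsOpen (U i) ∧ IsCatSet (U i)) ∧ (⋃ i, U i) = univ}

/-- A metrizable space `Y` is an absolute neighborhood retract (ANR) if for every metrizable
space `Z`, every closed subspace `C ⊆ Z` and every continuous `f : C → Y`, the map `f` admits
a continuous extension to an open neighborhood of `C` in `Z`. -/
def IsANR (Y : Type u) [TopologicalSpace Y] : Prop :=
  ∀ (Z : Type u) [TopologicalSpace Z] [TopologicalSpace.MetrizableSpace Z] (C : Set Z),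
    IsClosed C → ∀ f : C(↥C, Y),
      ∃ (U : Set Z) (_ : IsOpen U) (hCU : C ⊆ U) (g : C(↥U, Y)),
        ∀ (z : Z) (hz : z ∈ C), g ⟨z, hCU hz⟩ = f ⟨z, hz⟩

/-- The setoid on `Y` collapsing the subset `S` to a single point. -/
def collapseSetoid {Y : Type*} (S : Set Y) : Setoid Y where
  r a b := a = b ∨ (a ∈ S ∧ b ∈ S)
  iseqv := by
    refine ⟨fun a => Or.inl rfl, ?_, ?_⟩
    · rintro a b (rfl | ⟨h1, h2⟩)
      exacts [Or.inl rfl, Or.inr ⟨h2, h1⟩]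
    · rintro a b c (rfl | ⟨h1, h2⟩) (rfl | ⟨h3, h4⟩) <;> tauto

/-- The contraction `(t, p) ↦ (1 - t) p` of the sphere to the centre of the ball. -/
def shrink (n : ℕ) : C(unitInterval × ↥(Sph n), ↥(Ball n)) where
  toFun z := ⟨(1 - (z.1 : ℝ)) • (z.2 : EuclideanSpace ℝ (Fin (n + 1))), by
    have h1 := z.1.2.1
    have h2 := z.1.2.2
    have h3 : ‖(z.2 : EuclideanSpace ℝ (Fin (n + 1)))‖ = 1 := by simp
    rw [mem_closedBall_zero_iff, norm_smul, h3, Real.norm_eq_abs, abs_of_nonneg (by linarith)]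
    linarith⟩
  continuous_toFun := by fun_prop

lemma shrink_zero (n : ℕ) (p : ↥(Sph n)) : shrink n (0, p) = sphIncl n p := by
  ext1; simp [shrink, sphIncl]

lemma shrink_one (n : ℕ) (p : ↥(Sph n)) :
    shrink n (1, p) = ⟨0, mem_closedBall_self zero_le_one⟩ := by
  ext1; simp [shrink]

lemma ball_nullhomotopic {n : ℕ} {X : Type*} [TopologicalSpace X] (g : BallMaps n X)
    (h : C(↥(Sph n), ↥(Ball n))) :
    ∃ x : X, (g.comp h).Homotopic (ContinuousMap.const _ x) := by
  have : ContractibleSpace ↥(Ball n) :=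
    (convex_closedBall _ _).contractibleSpace ⟨0, mem_closedBall_self zero_le_one⟩
  exact ((id_nullhomotopic ↥(Ball n)).comp_left h).comp_right g

/-- The deformation `(γ, t) ↦ (p ↦ s(γ)((1 - t) p))` of `A` in `S_nX` given by `s`, in curried
form. -/
def deform {n : ℕ} {X : Type*} [TopologicalSpace X] {A : Set (SphereMaps n X)}
    (s : C(↥A, BallMaps n X)) : C(↥A, C(unitInterval, SphereMaps n X)) :=
  ContinuousMap.curry
    { toFun := fun z => ⟨(s z.1).comp ((shrink n).curry z.2), ball_nullhomotopic _ _⟩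
      continuous_toFun := by
        refine Continuous.subtype_mk ?_ _
        refine ContinuousMap.continuous_of_continuous_uncurry _ ?_
        change Continuous fun w : (↥A × unitInterval) × ↥(Sph n) =>
          s w.1.1 (shrink n (w.1.2, w.2))
        fun_prop }

lemma deform_apply {n : ℕ} {X : Type*} [TopologicalSpace X] {A : Set (SphereMaps n X)}
    (s : C(↥A, BallMaps n X)) (γ : ↥A) (t : unitInterval) (p : ↥(Sph n)) :
    (deform s γ t).1 p = s γ (shrink n (t, p)) := rfl

lemma deform_zero {n : ℕ} {X : Type*} [TopologicalSpace X] {A : Set (SphereMaps n X)}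
    {s : C(↥A, BallMaps n X)} (hs : IsSphereFilling A s) (γ : ↥A) : deform s γ 0 = γ := by
  ext p
  rw [deform_apply, shrink_zero, ← hs γ]
  rfl

lemma deform_one {n : ℕ} {X : Type*} [TopologicalSpace X] {A : Set (SphereMaps n X)}
    (s : C(↥A, BallMaps n X)) (γ : ↥A) : deform s γ 1 ∈ range (constSph n X) := by
  refine ⟨s γ ⟨0, mem_closedBall_self zero_le_one⟩, ?_⟩
  ext p
  rw [deform_apply, shrink_one]
  rfl

/-- The quotient map `S_nX → S_nX / c_n(X)`. -/
def quotC (n : ℕ) (X : Type*) [TopologicalSpace X] :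
    C(SphereMaps n X, Quotient (collapseSetoid (Set.range (constSph n X)))) :=
  ⟨Quotient.mk _, continuous_quotient_mk'⟩

lemma quotC_eq_iff {n : ℕ} {X : Type*} [TopologicalSpace X] {a b : SphereMaps n X} :
    quotC n X a = quotC n X b ↔
      a = b ∨ (a ∈ range (constSph n X) ∧ b ∈ range (constSph n X)) :=
  Quotient.eq

lemma isQuotientMap_quotC (n : ℕ) (X : Type*) [TopologicalSpace X] :
    Topology.IsQuotientMap (quotC n X) := isQuotientMap_quot_mk

/-- An open subset of `S_nX / c_n(X)` is categorical as soon as its preimage has a filling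
that sends constant maps to constant maps: the deformation of the filling then descends to the
quotient. -/
lemma isCatSet_of_filling {n : ℕ} {X : Type*} [TopologicalSpace X] [Nonempty X]
    (T : Set (Quotient (collapseSetoid (Set.range (constSph n X))))) (hT : IsOpen T)
    (s : C(↥(quotC n X ⁻¹' T), BallMaps n X)) (hs : IsSphereFilling _ s)
    (hconst : ∀ γ : ↥(quotC n X ⁻¹' T), (γ : SphereMaps n X) ∈ range (constSph n X) →
      ∃ x, ∀ p, s γ p = x) :
    IsCatSet T := by
  obtain ⟨x₀⟩ := ‹Nonempty X›
  -- The restriction of the quotient map to an open saturated set is again a quotient map.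
  let f : C(↥(quotC n X ⁻¹' T), ↥T) :=
    ⟨T.restrictPreimage (quotC n X), (quotC n X).continuous.restrictPreimage⟩
  have hf : Topology.IsQuotientMap f := (isQuotientMap_quotC n X).restrictPreimage_isOpen hT
  let G : C(↥(quotC n X ⁻¹' T), C(unitInterval, _)) :=
    ⟨fun γ => (quotC n X).comp (deform s γ), by fun_prop⟩
  have hG : Function.FactorsThrough G f := by
    intro a b hab
    have h : quotC n X a = quotC n X b := congrArg Subtype.val hab
    rcases quotC_eq_iff.1 h with h | ⟨ha, hb⟩
    · rw [Subtype.ext h]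
    · have key : ∀ c : ↥(quotC n X ⁻¹' T), (c : SphereMaps n X) ∈ range (constSph n X) →
          ∀ t, deform s c t ∈ range (constSph n X) := by
        intro c hc t
        obtain ⟨x, hx⟩ := hconst c hc
        refine ⟨x, ?_⟩
        ext p
        rw [deform_apply, hx]
        rfl
      ext t
      exact quotC_eq_iff.2 (Or.inr ⟨key a ha t, key b hb t⟩)
  let L : C(↥T, C(unitInterval, _)) := hf.lift G hG
  have hL : ∀ a, L (f a) = G a := fun a => DFunLike.congr_fun (hf.lift_comp G hG) a
  refine ⟨quotC n X (constSph n X x₀), ⟨⟨⟨fun z => L z.2 z.1, by fun_prop⟩, ?_, ?_⟩⟩⟩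
  · intro y
    obtain ⟨a, rfl⟩ := hf.surjective y
    change L (f a) 0 = _
    rw [hL]
    change quotC n X (deform s a 0) = _
    rw [deform_zero hs]
    rfl
  · intro y
    obtain ⟨a, rfl⟩ := hf.surjective y
    change L (f a) 1 = _
    rw [hL]
    exact quotC_eq_iff.2 (Or.inr ⟨deform_one s a, mem_range_self _⟩)

/-- A fixed point of the sphere. -/
def basePt (n : ℕ) : ↥(Sph n) := ⟨EuclideanSpace.single 0 1, by simp⟩

lemma mem_range_constSph {n : ℕ} {X : Type*} [TopologicalSpace X] {γ : SphereMaps n X} :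
    γ ∈ range (constSph n X) ↔ ∀ p, γ.1 p = γ.1 (basePt n) := by
  constructor
  · rintro ⟨x, rfl⟩ p
    rfl
  · intro h
    refine ⟨γ.1 (basePt n), ?_⟩
    ext p
    exact (h p).symm

lemma isClosed_range_constSph (n : ℕ) (X : Type*) [TopologicalSpace X] [T2Space X] :
    IsClosed (range (constSph n X)) := by
  have : range (constSph n X) =
      ⋂ p, {γ : SphereMaps n X | γ.1 p = γ.1 (basePt n)} := by
    ext γ
    simp only [mem_range_constSph, mem_iInter, mem_ofPred_eq]
  rw [this]
  exact isClosed_iInter fun p => isClosed_eq (by fun_prop) (by fun_prop)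

/-- In an ANR, maps `Sⁿ → X` close to constant ones can be filled continuously, the constant
ones by constant maps. -/
lemma exists_nhd_filling {X : Type u} [TopologicalSpace X]
    [TopologicalSpace.MetrizableSpace X] (hX : IsANR X) (n : ℕ) :
    ∃ W : Set (SphereMaps n X), IsOpen W ∧ range (constSph n X) ⊆ W ∧
      ∃ s : C(↥W, BallMaps n X), IsSphereFilling W s ∧
        ∀ γ : ↥W, (γ : SphereMaps n X) ∈ range (constSph n X) → ∃ x, ∀ p, s γ p = x := by
  classical
  let _ : MetricSpace X := TopologicalSpace.metrizableSpaceMetric X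
  let C₁ : Set (SphereMaps n X × ↥(Ball n)) :=
    {z | (z.2 : EuclideanSpace ℝ (Fin (n + 1))) ∈ Sph n}
  let C₂ : Set (SphereMaps n X × ↥(Ball n)) := {z | z.1 ∈ range (constSph n X)}
  have hC₁ : IsClosed C₁ := isClosed_sphere.preimage (by fun_prop)
  have hC₂ : IsClosed C₂ := (isClosed_range_constSph n X).preimage continuous_fst
  let f₀ : SphereMaps n X × ↥(Ball n) → X := fun z =>
    if h : (z.2 : EuclideanSpace ℝ (Fin (n + 1))) ∈ Sph n then z.1.1 ⟨z.2, h⟩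
    else z.1.1 (basePt n)
  have hf₁ : ContinuousOn f₀ C₁ := by
    rw [continuousOn_iff_continuous_domRestrict]
    have : C₁.domRestrict f₀ = fun z => z.1.1.1 ⟨z.1.2, z.2⟩ := by
      funext z
      exact dif_pos z.2
    rw [this]
    fun_prop
  have hf₂' : ∀ z ∈ C₂, f₀ z = z.1.1 (basePt n) := by
    intro z hz
    by_cases h : (z.2 : EuclideanSpace ℝ (Fin (n + 1))) ∈ Sph n
    · exact (dif_pos h).trans (mem_range_constSph.1 hz _)
    · exact dif_neg h
  have hf₂ : ContinuousOn f₀ C₂ := by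
    refine ContinuousOn.congr (f := fun z : SphereMaps n X × ↥(Ball n) => z.1.1 (basePt n)) ?_ hf₂'
    fun_prop
  have hf : ContinuousOn f₀ (C₁ ∪ C₂) := hf₁.union_of_isClosed hf₂ hC₁ hC₂
  obtain ⟨N, hN, hCN, g, hg⟩ := hX (SphereMaps n X × ↥(Ball n)) (C₁ ∪ C₂) (hC₁.union hC₂)
    ⟨(C₁ ∪ C₂).domRestrict f₀, hf.domRestrict⟩
  replace hg : ∀ z (hz : z ∈ C₁ ∪ C₂), g ⟨z, hCN hz⟩ = f₀ z := fun z hz => hg z hz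
  refine ⟨{γ | ∀ p, (γ, p) ∈ N}, ?_, ?_, ?_⟩
  · have : {γ : SphereMaps n X | ∀ p, (γ, p) ∈ N} = (Prod.fst '' Nᶜ)ᶜ := by
      ext γ
      simp
    rw [this]
    exact (isClosedMap_fst_of_compactSpace _ hN.isClosed_compl).isOpen_compl
  · intro γ hγ p
    exact hCN (Or.inr hγ)
  · refine ⟨ContinuousMap.curry ⟨fun z => g ⟨(z.1.1, z.2), z.1.2 z.2⟩, by fun_prop⟩, ?_, ?_⟩
    · intro γ
      ext p
      exact (hg (γ.1, sphIncl n p) (Or.inl p.2)).trans (dif_pos p.2)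
    · intro γ hγ
      refine ⟨γ.1.1 (basePt n), fun p => ?_⟩
      exact (hg (γ.1, p) (Or.inr hγ)).trans (hf₂' _ hγ)

/-- for a path-connected metrizable ANR `X`,
`SC_n(X) ≥ cat(S_nX / c_n(X)) - 1`. -/
theorem SC_ge_cat_quotient {X : Type u} [TopologicalSpace X] [PathConnectedSpace X]
    [TopologicalSpace.MetrizableSpace X] (hX : IsANR X) (n : ℕ) :
    LScat (Quotient (collapseSetoid (Set.range (constSph n X)))) - 1 ≤ SC n X := by
  have : Nonempty X := PathConnectedSpace.nonempty
  suffices H : ∀ (m : ℕ) (U : Fin m → Set (SphereMaps n X)),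
      (∀ i, IsOpen (U i) ∧ IsFillingDomain (U i)) → (⋃ i, U i) = univ →
      LScat (Quotient (collapseSetoid (Set.range (constSph n X)))) ≤ (m : ℕ∞) + 1 by
    refine le_sInf ?_
    rintro k ⟨m, rfl, U, hU, hcov⟩
    rw [tsub_le_iff_right]
    exact H m U hU hcov
  intro m U hU hcov
  obtain ⟨W, hWo, hAW, s, hs, hsc⟩ := exists_nhd_filling hX n
  have hWpre : quotC n X ⁻¹' (quotC n X '' W) = W := by
    refine Subset.antisymm ?_ (subset_preimage_image _ _)
    rintro γ ⟨δ, hδ, h⟩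
    rcases quotC_eq_iff.1 h with rfl | ⟨-, h⟩
    exacts [hδ, hAW h]
  have hUpre : ∀ i, quotC n X ⁻¹' (quotC n X '' (U i \ range (constSph n X))) =
      U i \ range (constSph n X) := by
    intro i
    refine Subset.antisymm ?_ (subset_preimage_image _ _)
    rintro γ ⟨δ, hδ, h⟩
    rcases quotC_eq_iff.1 h with rfl | ⟨h, -⟩
    exacts [hδ, absurd h hδ.2]
  have hopen : ∀ V : Set (SphereMaps n X), IsOpen V → quotC n X ⁻¹' (quotC n X '' V) = V →
      IsOpen (quotC n X '' V) := by
    intro V hV h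
    rwa [← (isQuotientMap_quotC n X).isOpen_preimage, h]
  refine sInf_le ⟨m + 1, by push_cast; rfl,
    Fin.cons (quotC n X '' W) fun i => quotC n X '' (U i \ range (constSph n X)), ?_, ?_⟩
  · intro i
    refine Fin.cases ?_ (fun i => ?_) i
    · rw [Fin.cons_zero]
      have ho := hopen W hWo hWpre
      refine ⟨ho, isCatSet_of_filling _ ho
        (s.comp ⟨fun γ => ⟨γ.1, hWpre.subset γ.2⟩, by fun_prop⟩) ?_ ?_⟩
      · exact fun γ => hs ⟨γ.1, hWpre.subset γ.2⟩
      · exact fun γ => hsc ⟨γ.1, hWpre.subset γ.2⟩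
    · rw [Fin.cons_succ]
      obtain ⟨s', hs'⟩ := (hU i).2
      have ho := hopen _ ((hU i).1.sdiff (isClosed_range_constSph n X)) (hUpre i)
      refine ⟨ho, isCatSet_of_filling _ ho
        (s'.comp ⟨fun γ => ⟨γ.1, ((hUpre i).subset γ.2).1⟩, by fun_prop⟩) ?_ ?_⟩
      · exact fun γ => hs' ⟨γ.1, ((hUpre i).subset γ.2).1⟩
      · exact fun γ hγ => absurd hγ ((hUpre i).subset γ.2).2
  · refine eq_univ_of_forall fun y => ?_
    obtain ⟨γ, rfl⟩ := (isQuotientMap_quotC n X).surjective y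
    rw [mem_iUnion]
    by_cases hγ : γ ∈ range (constSph n X)
    · exact ⟨0, γ, hAW hγ, rfl⟩
    · obtain ⟨i, hi⟩ := mem_iUnion.1 (hcov.symm.subset (mem_univ γ))
      exact ⟨i.succ, γ, ⟨hi, hγ⟩, rfl⟩

end
end

section
/- Let X be a path-connected metrizable ANR and n ∈ ℕ₀. If A ⊆ S_nX is closed, then there exists an open neighborhood U ⊆ S_nX of A with SC^cl_{n,X}(A) = SC^cl_{n,X}(U) = SC^cl_{n,X}(cl(U)). -/
/-!
The key fact is that every closed sphere filling domain has an open neighborhood that is again a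
sphere filling domain (`IsFillingDomain.exists_open`). Since `S_nX` is metrizable, hence normal, each
member of a minimal closed cover of `A` can then be enlarged to an open set whose closure is still a
filling domain; the union of these open sets is the desired neighborhood `U`, and monotonicity of
`SCcl` gives the remaining inequalities. If `A` has no finite cover, `U` is the whole space.
-/

open Metric Set ContinuousMap
open scoped RealInnerProductSpace

noncomputable section

universe u

/-- `SC^cl_{n,X}(A)`: the minimal number of sphere filling domains, closed in `S_nX`,
needed to cover `A` (`⊤` if no finite cover exists). -/
def SCcl (n : ℕ) (X : Type*) [TopologicalSpace X] (A : Set (SphereMaps n X)) : ℕ∞ :=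
  sInf {k : ℕ∞ | ∃ m : ℕ, k = m ∧ ∃ U : Fin m → Set (SphereMaps n X),
    (∀ i, IsClosed (U i) ∧ IsFillingDomain (U i)) ∧ A ⊆ ⋃ i, U i}

theorem metrizableSpace_sphereMaps (n : ℕ) (X : Type*) [TopologicalSpace X]
    [TopologicalSpace.MetrizableSpace X] :
    TopologicalSpace.MetrizableSpace (SphereMaps n X) := by
  have : CompactSpace ↥(Sph n) := isCompact_iff_compactSpace.mp (isCompact_sphere _ _)
  let : MetricSpace X := TopologicalSpace.metrizableSpaceMetric X
  infer_instance

/-- The set-theoretic union of a sphere filling over `A` (on `A × B^{n+1}`) and of the evaluation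
map (on `S_nX × Sⁿ`), extended arbitrarily elsewhere. -/
theorem exists_partialFilling {X : Type u} [TopologicalSpace X] {n : ℕ}
    {A : Set (SphereMaps n X)} (s : C(↥A, BallMaps n X)) (hs : IsSphereFilling A s) :
    ∃ F : SphereMaps n X × ↥(Ball n) → X,
      (∀ (z : SphereMaps n X × ↥(Ball n)) (h : z.1 ∈ A), F z = s ⟨z.1, h⟩ z.2) ∧
      (∀ (z : SphereMaps n X × ↥(Ball n)) (h : z.2.1 ∈ Sph n), F z = z.1.1 ⟨z.2.1, h⟩) := by
  classical
  refine ⟨fun z => if h : z.1 ∈ A then s ⟨z.1, h⟩ z.2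
    else if h' : z.2.1 ∈ Sph n then z.1.1 ⟨z.2.1, h'⟩
    else (z.1.2).choose, fun z h => dif_pos h, fun z h => ?_⟩
  by_cases hz : z.1 ∈ A
  · simp only [dif_pos hz]
    exact DFunLike.congr_fun (hs ⟨z.1, hz⟩) ⟨z.2.1, h⟩
  · simp only [dif_neg hz, dif_pos h]

/-- A sphere filling over a closed set extends over an open neighborhood: apply the ANR property to
the partial map on `S_nX × B^{n+1}` given by the filling over `A` and by evaluation on the boundary
sphere, then use the tube lemma (compactness of the ball) and curry. -/
theorem IsFillingDomain.exists_open {X : Type u} [TopologicalSpace X]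
    [TopologicalSpace.MetrizableSpace X] (hX : IsANR X) {n : ℕ}
    {A : Set (SphereMaps n X)} (hA : IsClosed A) (hfill : IsFillingDomain A) :
    ∃ V : Set (SphereMaps n X), IsOpen V ∧ A ⊆ V ∧ IsFillingDomain V := by
  obtain ⟨s, hs⟩ := hfill
  have : CompactSpace ↥(Ball n) := isCompact_iff_compactSpace.mp (isCompact_closedBall _ _)
  have := metrizableSpace_sphereMaps n X
  let C₁ : Set (SphereMaps n X × ↥(Ball n)) := {z | z.1 ∈ A}
  let C₂ : Set (SphereMaps n X × ↥(Ball n)) := {z | z.2.1 ∈ Sph n}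
  have hC₁ : IsClosed C₁ := hA.preimage continuous_fst
  have hC₂ : IsClosed C₂ := isClosed_sphere.preimage (continuous_subtype_val.comp continuous_snd)
  obtain ⟨F, hF₁, hF₂⟩ := exists_partialFilling s hs
  have hc₁ : ContinuousOn F C₁ := by
    rw [continuousOn_iff_continuous_domRestrict]
    have : C₁.domRestrict F = fun z : ↥C₁ => s ⟨z.1.1, z.2⟩ z.1.2 := by
      funext z
      exact hF₁ z.1 z.2
    rw [this]
    have h1 : Continuous fun z : ↥C₁ => s ⟨z.1.1, z.2⟩ :=
      s.continuous.comp ((continuous_fst.comp continuous_subtype_val).subtype_mk _)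
    exact h1.eval (continuous_snd.comp continuous_subtype_val)
  have hc₂ : ContinuousOn F C₂ := by
    rw [continuousOn_iff_continuous_domRestrict]
    have : C₂.domRestrict F = fun z : ↥C₂ => z.1.1.1 ⟨z.1.2.1, z.2⟩ := by
      funext z
      exact hF₂ z.1 z.2
    rw [this]
    have h1 : Continuous fun z : ↥C₂ => z.1.1.1 :=
      continuous_subtype_val.comp (continuous_fst.comp continuous_subtype_val)
    exact h1.eval ((continuous_subtype_val.comp
      (continuous_snd.comp continuous_subtype_val)).subtype_mk _)
  have hc : ContinuousOn F (C₁ ∪ C₂) := hc₁.union_of_isClosed hc₂ hC₁ hC₂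
  obtain ⟨W, hW, hCW, g, hg⟩ := hX (SphereMaps n X × ↥(Ball n)) (C₁ ∪ C₂) (hC₁.union hC₂)
    ⟨(C₁ ∪ C₂).domRestrict F, hc.domRestrict⟩
  have hg' : ∀ z (hz : z ∈ C₁ ∪ C₂), g ⟨z, hCW hz⟩ = F z := fun z hz => hg z hz
  let V : Set (SphereMaps n X) := {γ | ∀ b : ↥(Ball n), (γ, b) ∈ W}
  have hV : IsOpen V := by
    rw [isOpen_iff_mem_nhds]
    intro γ hγ
    have := isCompact_univ.eventually_forall_of_forall_eventually (X := SphereMaps n X)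
      (K := (univ : Set ↥(Ball n))) (x₀ := γ) (P := fun γ b => (γ, b) ∈ W)
      (fun b _ => hW.mem_nhds (hγ b))
    filter_upwards [this] with γ' h b using h b (mem_univ b)
  have hAV : A ⊆ V := fun γ hγ b => hCW (Or.inl hγ)
  let G : C(↥V × ↥(Ball n), X) := g.comp
    ⟨fun z => ⟨(z.1.1, z.2), z.1.2 z.2⟩, by fun_prop⟩
  refine ⟨V, hV, hAV, G.curry, ?_⟩
  intro γ
  ext p
  have hp : (sphIncl n p).1 ∈ Sph n := p.2
  have h1 : G (γ, sphIncl n p) = F (γ.1, sphIncl n p) := hg' (γ.1, sphIncl n p) (Or.inr hp)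
  have h2 : F (γ.1, sphIncl n p) = γ.1.1 p := hF₂ (γ.1, sphIncl n p) hp
  exact h1.trans h2

theorem SCcl_mono {X : Type u} [TopologicalSpace X] {n : ℕ} {A B : Set (SphereMaps n X)}
    (h : A ⊆ B) : SCcl n X A ≤ SCcl n X B := by
  apply sInf_le_sInf
  rintro k ⟨m, hk, U, hU, hB⟩
  exact ⟨m, hk, U, hU, h.trans hB⟩

theorem IsFillingDomain.mono {X : Type u} [TopologicalSpace X] {n : ℕ}
    {A B : Set (SphereMaps n X)} (h : A ⊆ B) (hB : IsFillingDomain B) : IsFillingDomain A := by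
  obtain ⟨s, hs⟩ := hB
  exact ⟨s.comp ⟨Set.inclusion h, continuous_inclusion h⟩, fun γ => hs (Set.inclusion h γ)⟩

/-- continuity: in a path-connected metrizable ANR, every closed
`A ⊆ S_nX` has an open neighborhood `U` with
`SC^cl_{n,X}(A) = SC^cl_{n,X}(U) = SC^cl_{n,X}(cl U)`. -/
theorem SCcl_continuity {X : Type u} [TopologicalSpace X] [PathConnectedSpace X]
    [TopologicalSpace.MetrizableSpace X] (hX : IsANR X) (n : ℕ)
    (A : Set (SphereMaps n X)) (hA : IsClosed A) :
    ∃ U : Set (SphereMaps n X), IsOpen U ∧ A ⊆ U ∧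
      SCcl n X A = SCcl n X U ∧ SCcl n X U = SCcl n X (closure U) := by
  suffices h : ∃ U : Set (SphereMaps n X), IsOpen U ∧ A ⊆ U ∧
      SCcl n X (closure U) ≤ SCcl n X A by
    obtain ⟨U, hU, hAU, hle⟩ := h
    have h1 : SCcl n X A ≤ SCcl n X U := SCcl_mono hAU
    have h2 : SCcl n X U ≤ SCcl n X (closure U) := SCcl_mono subset_closure
    exact ⟨U, hU, hAU, le_antisymm h1 (h2.trans hle), le_antisymm h2 (hle.trans h1)⟩
  have := metrizableSpace_sphereMaps n X
  rcases Set.eq_empty_or_nonempty {k : ℕ∞ | ∃ m : ℕ, k = m ∧ ∃ U : Fin m → Set (SphereMaps n X),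
    (∀ i, IsClosed (U i) ∧ IsFillingDomain (U i)) ∧ A ⊆ ⋃ i, U i} with he | hne
  · refine ⟨univ, isOpen_univ, subset_univ _, ?_⟩
    have : SCcl n X A = ⊤ := by rw [SCcl, he, sInf_empty]
    rw [this]
    exact le_top
  · -- A nonempty set of extended naturals attains its infimum.
    obtain ⟨m, hm, D, hD, hAD⟩ := csInf_mem hne
    choose V hV hDV hVf using fun i => (hD i).2.exists_open hX (hD i).1
    choose O hO hDO hOV using fun i => normal_exists_closure_subset (hD i).1 (hV i) (hDV i)
    refine ⟨⋃ i, O i, isOpen_iUnion hO, hAD.trans (iUnion_mono hDO), ?_⟩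
    have hm' : SCcl n X A = m := hm
    rw [hm']
    refine sInf_le ⟨m, rfl, fun i => closure (O i),
      fun i => ⟨isClosed_closure, (hVf i).mono (hOV i)⟩, ?_⟩
    rw [closure_iUnion_of_finite]

end
end
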